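/- Let m > 1 be an integer and let q be a real number with 0 < q < 1. Then ∏_{k=1}^{2^{m-1}} Γ_q((2k-1)/2^m) = (1-q)^{2^{m-2}} · ψ(q^{1/2^m}) · ∏_{k=1}^{m-1} (ψ(q^{1/2^k}))^{2^{m-1-k}}. -/

import Mathlib

/-!
Let `x = q^{1/(2n)}`. The factors of the symbols `(q^{(2k-1)/(2n)}; q)_∞`, `1 ≤ k ≤ n`, are together
those of `(x; x²)_∞`, split by the index modulo `n`. Hence for every `n ≥ 1` the product of the
`Γ_q((2k-1)/(2n))` is
`(1-q)^{n/2} (q; q)_∞ⁿ / (x; x²)_∞ = (1-q)^{n/2} ψ(x) (q; q)_∞ⁿ / (x²; x²)_∞`.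
Writing `E(y) = (y; y)_∞`, one has `ψ(y) = E(y²)² / E(y)`, so for `n = 2^N` and
`y = q^{1/n} = x²` the remaining quotient `E(q)ⁿ / E(y)` telescopes into the product of the
`ψ(y^{2^k})^{2^k}`, `k < N`.
-/

/-- Infinite q-Pochhammer symbol `(a; q)_∞ = ∏_{i=0}^∞ (1 - a qⁱ)` (real version). -/
noncomputable def qPochR (a q : ℝ) : ℝ := ∏' i : ℕ, (1 - a * q ^ i)

/-- The q-gamma function `Γ_q(z) = ((q;q)_∞ / (q^z;q)_∞) (1-q)^{1-z}` for `0 < q < 1`. -/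
noncomputable def qGamma (q z : ℝ) : ℝ :=
  qPochR q q / qPochR (q ^ z) q * (1 - q) ^ (1 - z)

/-- Ramanujan's theta function `ψ(q) = (q²;q²)_∞ / (q;q²)_∞`. -/
noncomputable def psiR (q : ℝ) : ℝ := qPochR (q ^ 2) (q ^ 2) / qPochR q (q ^ 2)

theorem tprod_eq_prod_range_tprod_mul_add {α : Type*} [CommMonoid α] [TopologicalSpace α]
    [ContinuousMul α] [T3Space α] {f : ℕ → α} {n : ℕ} (hn : n ≠ 0) (hf : Multipliable f)
    (hfib : ∀ j, Multipliable fun i => f (n * i + j)) :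
    ∏' i, f i = ∏ j ∈ Finset.range n, ∏' i, f (n * i + j) := by
  have : NeZero n := ⟨hn⟩
  let e : Fin n × ℕ ≃ ℕ := (Equiv.prodComm _ _).trans (Nat.divModEquiv n).symm
  have he (j : Fin n) (i : ℕ) : e (j, i) = n * i + j := by simp [e, mul_comm]
  calc ∏' i, f i = ∏' p, f (e p) := (e.tprod_eq f).symm
    _ = ∏' j, ∏' i, f (e (j, i)) :=
      (e.multipliable_iff.mpr hf).tprod_prod' fun j => by
        simpa only [Function.comp_apply, he] using hfib j
    _ = ∏ j ∈ Finset.range n, ∏' i, f (n * i + j) := by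
      simp only [he, tprod_fintype, Finset.prod_range]

section qPochR

variable {q : ℝ}

theorem summable_norm_neg_mul_pow (a : ℝ) (hq : |q| < 1) :
    Summable fun i : ℕ => ‖-(a * q ^ i)‖ :=
  ((summable_geometric_of_abs_lt_one hq).mul_left a).neg.norm

theorem multipliable_one_sub_mul_pow (a : ℝ) (hq : |q| < 1) :
    Multipliable fun i : ℕ => 1 - a * q ^ i := by
  simpa only [sub_eq_add_neg] using
    multipliable_one_add_of_summable (summable_norm_neg_mul_pow a hq)

theorem qPochR_ne_zero {a : ℝ} (hq : |q| < 1) (ha : ∀ i : ℕ, a * q ^ i ≠ 1) :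
    qPochR a q ≠ 0 := by
  simpa only [qPochR, sub_eq_add_neg] using
    tprod_one_add_ne_zero_of_summable
      (fun i => by simpa only [← sub_eq_add_neg] using sub_ne_zero.mpr (ha i).symm)
      (summable_norm_neg_mul_pow a hq)

theorem qPochR_ne_zero_of_abs_lt_one {a : ℝ} (ha : |a| < 1) (hq : |q| < 1) :
    qPochR a q ≠ 0 := by
  refine qPochR_ne_zero hq fun i h => ?_
  have hlt : |a * q ^ i| < 1 := by
    rw [abs_mul, abs_pow]
    exact mul_lt_one_of_nonneg_of_lt_one_left (abs_nonneg a) ha (pow_le_one₀ (abs_nonneg q) hq.le)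
  simp [h] at hlt

theorem qPochR_eq_prod_qPochR_mul_pow (a : ℝ) (hq : |q| < 1) {n : ℕ} (hn : n ≠ 0) :
    qPochR a q = ∏ j ∈ Finset.range n, qPochR (a * q ^ j) (q ^ n) := by
  have hqn : |q ^ n| < 1 := by simpa only [abs_pow] using pow_lt_one₀ (abs_nonneg q) hq hn
  have hterm (j i : ℕ) : 1 - a * q ^ (n * i + j) = 1 - a * q ^ j * (q ^ n) ^ i := by ring
  simp only [qPochR, ← hterm]
  exact tprod_eq_prod_range_tprod_mul_add hn (multipliable_one_sub_mul_pow a hq) fun j => by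
    simpa only [hterm] using multipliable_one_sub_mul_pow (a * q ^ j) hqn

end qPochR

theorem psiR_eq_sq_div {x : ℝ} (hx : |x| < 1) :
    psiR x = qPochR (x ^ 2) (x ^ 2) ^ 2 / qPochR x x := by
  have hx2 : |x ^ 2| < 1 := by simpa only [abs_pow] using pow_lt_one₀ (abs_nonneg x) hx two_ne_zero
  have hodd : qPochR x (x ^ 2) ≠ 0 := qPochR_ne_zero_of_abs_lt_one hx hx2
  have heven : qPochR (x ^ 2) (x ^ 2) ≠ 0 := qPochR_ne_zero_of_abs_lt_one hx2 hx2
  have hsplit : qPochR x x = qPochR x (x ^ 2) * qPochR (x ^ 2) (x ^ 2) := by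
    simpa [Finset.prod_range_succ, ← sq] using qPochR_eq_prod_qPochR_mul_pow x hx two_ne_zero
  rw [psiR, hsplit]
  field_simp

theorem prod_psiR_pow_two_pow {y : ℝ} (hy : |y| < 1) (n : ℕ) :
    ∏ k ∈ Finset.range n, psiR (y ^ 2 ^ k) ^ 2 ^ k =
      qPochR (y ^ 2 ^ n) (y ^ 2 ^ n) ^ 2 ^ n / qPochR y y := by
  have hpow (k : ℕ) : |y ^ 2 ^ k| < 1 := by
    simpa only [abs_pow] using pow_lt_one₀ (abs_nonneg y) hy (by positivity)
  have hne (k : ℕ) : qPochR (y ^ 2 ^ k) (y ^ 2 ^ k) ≠ 0 :=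
    qPochR_ne_zero_of_abs_lt_one (hpow k) (hpow k)
  induction n with
  | zero => simpa using (div_self (hne 0)).symm
  | succ n ih =>
    rw [Finset.prod_range_succ, ih, psiR_eq_sq_div (hpow n), ← pow_mul, ← pow_succ, div_pow,
      ← pow_mul, ← pow_succ', mul_comm, div_mul_div_cancel₀ (pow_ne_zero _ (hne n))]

theorem abs_rpow_lt_one {q s : ℝ} (hq0 : 0 ≤ q) (hq1 : q < 1) (hs : 0 < s) : |q ^ s| < 1 := by
  rw [abs_of_nonneg (Real.rpow_nonneg hq0 s)]
  exact Real.rpow_lt_one hq0 hq1 hs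

theorem prod_psiR_rpow_one_div_two_pow {q : ℝ} (hq0 : 0 ≤ q) (hq1 : q < 1) (n : ℕ) :
    ∏ k ∈ Finset.Icc 1 n, psiR (q ^ ((1 : ℝ) / 2 ^ k)) ^ 2 ^ (n - k) =
      qPochR q q ^ 2 ^ n / qPochR (q ^ ((1 : ℝ) / 2 ^ n)) (q ^ ((1 : ℝ) / 2 ^ n)) := by
  set y : ℝ := q ^ ((1 : ℝ) / 2 ^ n) with hy
  have hy1 : |y| < 1 := abs_rpow_lt_one hq0 hq1 (by positivity)
  have hpow {k : ℕ} (hk : k ≤ n) : y ^ 2 ^ k = q ^ ((1 : ℝ) / 2 ^ (n - k)) := by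
    rw [hy, ← Real.rpow_mul_natCast hq0, pow_sub₀ _ two_ne_zero hk]
    congr 1
    push_cast
    field_simp
  have hyq : y ^ 2 ^ n = q := by simpa using hpow le_rfl
  rw [← hyq, ← prod_psiR_pow_two_pow hy1, hyq]
  refine Finset.prod_bij' (fun k _ => n - k) (fun k _ => n - k) ?_ ?_ ?_ ?_ ?_ <;>
    simp only [Finset.mem_Icc, Finset.mem_range]
  any_goals lia
  rintro k ⟨-, hk⟩
  rw [hpow (Nat.sub_le n k), Nat.sub_sub_self hk]

theorem sum_range_one_sub_add_div (z d : ℝ) (n : ℕ) :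
    ∑ j ∈ Finset.range n, (1 - (z + j / d)) = n * (1 - z) - n * (n - 1) / (2 * d) := by
  induction n with
  | zero => simp
  | succ n ih =>
    rw [Finset.sum_range_succ, ih]
    push_cast
    ring

section qGamma

variable {q : ℝ}

/-- Gauss's multiplication formula for `Γ_q`: with `r = q^{1/n}`, the denominator on the right is
`(r^{nz}; r)_∞`, the one of `Γ_r(nz)`. -/
theorem prod_qGamma_add_div (hq0 : 0 < q) (hq1 : q < 1) (z : ℝ) {n : ℕ} (hn : n ≠ 0) :
    ∏ j ∈ Finset.range n, qGamma q (z + j / n) =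
      qPochR q q ^ n / qPochR (q ^ z) (q ^ (1 / n : ℝ)) * (1 - q) ^ (n * (1 / 2 - z) + 1 / 2) := by
  have hr : |q ^ (1 / n : ℝ)| < 1 := abs_rpow_lt_one hq0.le hq1 (by positivity)
  have hrq : (q ^ (1 / n : ℝ)) ^ n = q := by
    rw [one_div, Real.rpow_inv_natCast_pow hq0.le hn]
  have hshift (j : ℕ) : q ^ z * (q ^ (1 / n : ℝ)) ^ j = q ^ (z + j / n) := by
    rw [← Real.rpow_mul_natCast hq0.le, ← Real.rpow_add hq0, one_div_mul_eq_div]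
  have hpoch : ∏ j ∈ Finset.range n, qPochR (q ^ (z + j / n)) q =
      qPochR (q ^ z) (q ^ (1 / n : ℝ)) := by
    simp only [qPochR_eq_prod_qPochR_mul_pow (q ^ z) hr hn, hrq, hshift]
  have hexp : ∑ j ∈ Finset.range n, (1 - (z + j / n)) = n * (1 / 2 - z) + 1 / 2 := by
    rw [sum_range_one_sub_add_div]
    field_simp
    ring
  simp only [qGamma, Finset.prod_mul_distrib, Finset.prod_div_distrib, Finset.prod_const,
    Finset.card_range, hpoch, ← Real.rpow_sum_of_pos (sub_pos.mpr hq1), hexp]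

theorem prod_qGamma_odd_div (hq0 : 0 < q) (hq1 : q < 1) {n : ℕ} (hn : n ≠ 0) :
    ∏ k ∈ Finset.Icc 1 n, qGamma q ((2 * (k : ℝ) - 1) / (2 * n)) =
      (1 - q) ^ (n / 2 : ℝ) * psiR (q ^ (1 / (2 * n) : ℝ)) *
        (qPochR q q ^ n / qPochR (q ^ (1 / n : ℝ)) (q ^ (1 / n : ℝ))) := by
  have hxsq : (q ^ (1 / (2 * n) : ℝ)) ^ 2 = q ^ (1 / n : ℝ) := by
    rw [← Real.rpow_mul_natCast hq0.le]
    congr 1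
    push_cast
    field_simp
  have hr : |q ^ (1 / n : ℝ)| < 1 := abs_rpow_lt_one hq0.le hq1 (by positivity)
  have hne := qPochR_ne_zero_of_abs_lt_one hr hr
  calc ∏ k ∈ Finset.Icc 1 n, qGamma q ((2 * (k : ℝ) - 1) / (2 * n))
      = ∏ j ∈ Finset.range n, qGamma q (1 / (2 * n) + j / n) := by
        rw [← Finset.Ico_add_one_right_eq_Icc, Finset.prod_Ico_eq_prod_range, Nat.add_sub_cancel]
        refine Finset.prod_congr rfl fun j _ => congrArg (qGamma q) ?_
        push_cast
        field_simp
        ring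
    _ = qPochR q q ^ n / qPochR (q ^ (1 / (2 * n) : ℝ)) (q ^ (1 / n : ℝ)) *
          (1 - q) ^ (n / 2 : ℝ) := by
        rw [prod_qGamma_add_div hq0 hq1 _ hn]
        congr 2
        field_simp
        ring
    _ = _ := by
        rw [psiR, hxsq]
        field_simp

end qGamma

theorem two_power_product (m : ℕ) (hm : 1 < m) (q : ℝ) (hq0 : 0 < q) (hq1 : q < 1) :
    ∏ k ∈ Finset.Icc 1 (2 ^ (m - 1) : ℕ), qGamma q ((2 * (k : ℝ) - 1) / 2 ^ m) =
      (1 - q) ^ (2 ^ (m - 2)) * psiR (q ^ ((1 : ℝ) / 2 ^ m)) *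
        ∏ k ∈ Finset.Icc 1 (m - 1), (psiR (q ^ ((1 : ℝ) / 2 ^ k))) ^ (2 ^ (m - 1 - k)) := by
  obtain ⟨n, rfl⟩ : ∃ n, m = n + 2 := ⟨m - 2, by lia⟩
  have hgamma := prod_qGamma_odd_div hq0 hq1 (n := 2 ^ (n + 1)) (by positivity)
  have hdouble : (2 : ℝ) * (2 ^ (n + 1) : ℕ) = 2 ^ (n + 2) := by push_cast; ring
  have hhalf : ((2 ^ (n + 1) : ℕ) : ℝ) / 2 = (2 ^ n : ℕ) := by push_cast; ring
  rw [hdouble, hhalf, Real.rpow_natCast, Nat.cast_pow, Nat.cast_ofNat] at hgamma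
  rw [Nat.add_sub_cancel, show n + 2 - 1 = n + 1 from rfl,
    prod_psiR_rpow_one_div_two_pow hq0.le hq1, hgamma]
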